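/- arXiv:2208.00864 — 2 statements merged into one kernel-verified Lean document; each statement's English description precedes it below -/
import Mathlib

section
/- For the Ising model at zero field on a finite graph G = (V,E) and any subset A ⊆ V, the spin correlation admits the random current representation: ⟨σ_A⟩ = (Σ_{n : ∂n = A} w_β(n)) / (Σ_{n : ∂n = ∅} w_β(n)), where currents n : E → ℕ have weights w_β(n) = Π_{e∈E} β^{n_e}/(n_e!) and ∂n is the set of vertices with odd total incident current. -/
open Finset

/-- The spin value attached to a Boolean: `+1` or `-1`. -/
noncomputable def spin (b : Bool) : ℝ := if b then 1 else -1

/-- Interaction energy `Σ_{{x,y}∈E} σ_x σ_y` of a spin configuration. -/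
noncomputable def interaction {V : Type*} [Fintype V] [DecidableEq V]
    (G : SimpleGraph V) [DecidableRel G.Adj] (σ : V → Bool) : ℝ :=
  ∑ e ∈ G.edgeFinset,
    Sym2.lift ⟨fun x y => spin (σ x) * spin (σ y), fun _ _ => by ring⟩ e

/-- The weight `w_β(n) = Π_{e∈E} β^{n_e}/n_e!` of a current `n : E → ℕ`. -/
noncomputable def currentWeight {V : Type*} [Fintype V] [DecidableEq V]
    (G : SimpleGraph V) [DecidableRel G.Adj] (β : ℝ)
    (n : ↥G.edgeFinset → ℕ) : ℝ :=
  ∏ e : ↥G.edgeFinset, β ^ (n e) / (Nat.factorial (n e) : ℝ)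

/-- The source set `∂n` of a current: the vertices whose total incident current
`Δ_x(n) = Σ_{y : {x,y}∈E} n_{{x,y}}` is odd. -/
def sources {V : Type*} [Fintype V] [DecidableEq V]
    (G : SimpleGraph V) [DecidableRel G.Adj] (n : ↥G.edgeFinset → ℕ) : Finset V :=
  Finset.univ.filter fun x =>
    ¬ Even (∑ e : ↥G.edgeFinset, if x ∈ (e : Sym2 V) then n e else 0)

lemma rc_fin_aux : ∀ (m : ℕ) (f : Fin m → ℕ → ℝ), (∀ i, Summable fun k => ‖f i k‖) →
    (Summable fun n : Fin m → ℕ => ‖∏ i, f i (n i)‖) ∧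
      ∑' n : Fin m → ℕ, ∏ i, f i (n i) = ∏ i, ∑' k, f i k := by
  intro m
  induction m with
  | zero =>
    intro f _
    refine ⟨(hasSum_fintype _).summable, ?_⟩
    rw [tsum_fintype]
    simp
  | succ m ih =>
    intro f hf
    obtain ⟨h1, h2⟩ := ih (fun i => f i.succ) (fun i => hf _)
    let e : ℕ × (Fin m → ℕ) ≃ (Fin (m + 1) → ℕ) := Fin.consEquiv (fun _ => ℕ)
    have he : ∀ p : ℕ × (Fin m → ℕ),
        ∏ i, f i (e p i) = f 0 p.1 * ∏ i : Fin m, f i.succ (p.2 i) := by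
      intro p
      rw [Fin.prod_univ_succ]
      simp [e, Fin.consEquiv]
    constructor
    · rw [← e.summable_iff]
      refine (Summable.mul_norm (hf 0) h1).congr ?_
      intro p
      simp only [Function.comp, he]
    · rw [← e.tsum_eq]
      simp only [he]
      rw [Fin.prod_univ_succ, ← h2, tsum_mul_tsum_of_summable_norm (hf 0) h1]

lemma rc_hasSum_pi {ι : Type*} [Fintype ι] (f : ι → ℕ → ℝ)
    (hf : ∀ i, Summable fun k => ‖f i k‖) :
    HasSum (fun n : ι → ℕ => ∏ i, f i (n i)) (∏ i, ∑' k, f i k) := by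
  let e := Fintype.equivFin ι
  obtain ⟨h1, h2⟩ := rc_fin_aux _ (fun j => f (e.symm j)) (fun j => hf _)
  let E : (Fin (Fintype.card ι) → ℕ) ≃ (ι → ℕ) := e.symm.arrowCongr (Equiv.refl ℕ)
  rw [← E.hasSum_iff, ← e.symm.prod_comp, ← h2]
  have hE : ((fun n : ι → ℕ => ∏ i, f i (n i)) ∘ E)
      = fun n : Fin (Fintype.card ι) → ℕ => ∏ i, f (e.symm i) (n i) := by
    funext n
    simp only [Function.comp]
    rw [← e.symm.prod_comp]
    simp [E, Equiv.arrowCongr]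
  rw [hE]
  exact h1.of_norm.hasSum

lemma rc_edge {V : Type*} [Fintype V] [DecidableEq V]
    (G : SimpleGraph V) [DecidableRel G.Adj] (σ : V → Bool) (e : Sym2 V)
    (he : e ∈ G.edgeFinset) :
    Sym2.lift ⟨fun x y => spin (σ x) * spin (σ y), fun _ _ => by ring⟩ e
      = ∏ x : V, if x ∈ e then spin (σ x) else 1 := by
  induction e using Sym2.ind with
  | _ a b =>
    have hab : a ≠ b := by
      have : G.Adj a b := by simpa using he
      exact this.ne
    rw [← Finset.prod_filter]
    have : (Finset.univ.filter fun x => x ∈ s(a, b)) = {a, b} := by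
      ext x; simp
    rw [this, Finset.prod_pair hab]
    rfl

lemma rc_exp {V : Type*} [Fintype V] [DecidableEq V]
    (G : SimpleGraph V) [DecidableRel G.Adj] (β : ℝ) (σ : V → Bool) :
    HasSum (fun n : ↥G.edgeFinset → ℕ => currentWeight G β n *
      ∏ x : V, spin (σ x) ^ (∑ e : ↥G.edgeFinset, if x ∈ (e : Sym2 V) then n e else 0))
      (Real.exp (β * interaction G σ)) := by
  let s : ↥G.edgeFinset → ℝ := fun e => ∏ x : V, if x ∈ (e : Sym2 V) then spin (σ x) else 1
  have h := rc_hasSum_pi (fun (e : ↥G.edgeFinset) k => (β * s e) ^ k / (Nat.factorial k : ℝ))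
    (fun e => by
      exact NormedSpace.norm_expSeries_div_summable (β * s e))
  have h1 : Real.exp (β * interaction G σ) =
      ∏ e : ↥G.edgeFinset, ∑' k : ℕ, (β * s e) ^ k / (Nat.factorial k : ℝ) := by
    have h2 : ∀ e : ↥G.edgeFinset,
        ∑' k : ℕ, (β * s e) ^ k / (Nat.factorial k : ℝ) = Real.exp (β * s e) := by
      intro e
      rw [Real.exp_eq_exp_ℝ, NormedSpace.exp_eq_tsum_div]
    simp only [h2]
    rw [← Real.exp_sum, ← Finset.mul_sum, interaction, ← Finset.sum_coe_sort]
    congr 2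
    exact Finset.sum_congr rfl fun e _ => rc_edge G σ e e.2
  rw [h1]
  convert h using 2 with n
  rw [currentWeight]
  simp only [mul_pow, s]
  simp_rw [mul_div_right_comm]
  rw [Finset.prod_mul_distrib]
  congr 1
  simp_rw [← Finset.prod_pow]
  rw [Finset.prod_comm]
  refine Finset.prod_congr rfl fun x _ => ?_
  rw [← Finset.prod_pow_eq_pow_sum]
  refine Finset.prod_congr rfl fun e _ => ?_
  split_ifs <;> simp

lemma rc_spin_sum {V : Type*} [Fintype V] [DecidableEq V]
    (G : SimpleGraph V) [DecidableRel G.Adj] (A : Finset V) (n : ↥G.edgeFinset → ℕ) :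
    ∑ σ : V → Bool, (∏ x ∈ A, spin (σ x)) *
      ∏ x : V, spin (σ x) ^ (∑ e : ↥G.edgeFinset, if x ∈ (e : Sym2 V) then n e else 0)
      = if sources G n = A then 2 ^ Fintype.card V else 0 := by
  set d : V → ℕ := fun x => ∑ e : ↥G.edgeFinset, if x ∈ (e : Sym2 V) then n e else 0 with hd
  have h1 : ∀ σ : V → Bool, (∏ x ∈ A, spin (σ x)) * ∏ x : V, spin (σ x) ^ d x
      = ∏ x : V, ((if x ∈ A then spin (σ x) else 1) * spin (σ x) ^ d x) := by
    intro σ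
    rw [Finset.prod_mul_distrib]
    simp
  have h2 : ∀ x : V, ∑ b : Bool, ((if x ∈ A then spin b else 1) * spin b ^ d x)
      = if (¬ Even (d x) ↔ x ∈ A) then (2 : ℝ) else 0 := by
    intro x
    rw [Fintype.sum_bool]
    by_cases hx : x ∈ A <;> rcases Nat.even_or_odd (d x) with hp | hp
    · simp [spin, hx, hp, hp.neg_one_pow]
    · have : ¬ Even (d x) := Nat.not_even_iff_odd.2 hp
      simp [spin, hx, this, hp, hp.neg_one_pow]; norm_num
    · simp [spin, hx, hp, hp.neg_one_pow]; norm_num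
    · have : ¬ Even (d x) := Nat.not_even_iff_odd.2 hp
      simp [spin, hx, hp, hp.neg_one_pow]
  have h3 := Finset.prod_univ_sum (fun _ : V => (Finset.univ : Finset Bool))
    (fun x b => (if x ∈ A then spin b else 1) * spin b ^ d x)
  rw [Fintype.piFinset_univ] at h3
  change ∑ σ : V → Bool, (∏ x ∈ A, spin (σ x)) * ∏ x : V, spin (σ x) ^ d x = _
  simp_rw [h1]
  rw [← h3]
  simp_rw [h2]
  have h4 : sources G n = A ↔ ∀ x, (¬ Even (d x) ↔ x ∈ A) := by
    rw [Finset.ext_iff]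
    simp only [sources, Finset.mem_filter, Finset.mem_univ, true_and, hd]
  by_cases h : sources G n = A
  · rw [if_pos h]
    simp only [h4.1 h, if_true]
    simp
  · rw [if_neg h]
    rw [h4] at h
    obtain ⟨x, hx⟩ := not_forall.1 h
    exact Finset.prod_eq_zero (Finset.mem_univ x) (if_neg hx)

lemma rc_main {V : Type*} [Fintype V] [DecidableEq V]
    (G : SimpleGraph V) [DecidableRel G.Adj] (β : ℝ) (A : Finset V) :
    ∑ σ : V → Bool, (∏ x ∈ A, spin (σ x)) * Real.exp (β * interaction G σ) =
      2 ^ Fintype.card V *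
        ∑' n : ↥G.edgeFinset → ℕ, if sources G n = A then currentWeight G β n else 0 := by
  have h := hasSum_sum (s := (Finset.univ : Finset (V → Bool)))
    (fun σ _ => (rc_exp G β σ).mul_left (∏ x ∈ A, spin (σ x)))
  rw [← h.tsum_eq, ← tsum_mul_left]
  refine tsum_congr fun n => ?_
  have := rc_spin_sum G A n
  simp_rw [mul_left_comm _ (currentWeight G β n)]
  rw [← Finset.mul_sum, this]
  split_ifs <;> ring

/-- **Random current representation of spin correlations**: for the Ising model at
zero field on a finite graph `G = (V,E)` and any `A ⊆ V`,
`⟨σ_A⟩ = (Σ_{∂n=A} w_β(n)) / (Σ_{∂n=∅} w_β(n))`. -/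
theorem correlation_random_current {V : Type*} [Fintype V] [DecidableEq V]
    (G : SimpleGraph V) [DecidableRel G.Adj] (β : ℝ) (A : Finset V) :
    (∑ σ : V → Bool, (∏ x ∈ A, spin (σ x)) * Real.exp (β * interaction G σ)) /
        (∑ σ : V → Bool, Real.exp (β * interaction G σ)) =
      (∑' n : ↥G.edgeFinset → ℕ, if sources G n = A then currentWeight G β n else 0) /
        (∑' n : ↥G.edgeFinset → ℕ, if sources G n = ∅ then currentWeight G β n else 0) := by
  have h0 := rc_main G β ∅
  simp only [Finset.prod_empty, one_mul] at h0
  rw [rc_main G β A, h0]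
  exact mul_div_mul_left _ _ (by positivity)
end

section
/- As a consequence of the switching lemma, for the Ising model at zero field on a finite graph G and any A ⊆ V, the square of the spin correlation satisfies ⟨σ_A⟩² = P^∅⊗P^∅[n₁ + n₂ ∈ F_A], where P^∅ is the probability measure on currents with empty sources proportional to w(n), the two currents n₁, n₂ are independent, and F_A is the event that there exists k ≤ n₁+n₂ with ∂k = A. -/
open Finset

lemma ite_any_inst {P Q : Prop} {i : Decidable P} {j : Decidable Q} (h : P ↔ Q) (a b : ℝ) :
    @ite ℝ P i a b = @ite ℝ Q j a b := by
  by_cases hp : P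
  · rw [if_pos hp, if_pos (h.1 hp)]
  · rw [if_neg hp, if_neg (fun hq => hp (h.2 hq))]

lemma mul_ite_any_inst {P : Prop} {i j : Decidable P} (a : ℝ) :
    a * @ite ℝ P i 1 0 = @ite ℝ P j a 0 := by
  by_cases hp : P
  · rw [if_pos hp, if_pos hp, mul_one]
  · rw [if_neg hp, if_neg hp, mul_zero]

lemma sources_parity {V : Type*} [Fintype V] [DecidableEq V]
    (G : SimpleGraph V) [DecidableRel G.Adj] (n k m c : ↥G.edgeFinset → ℕ)
    (h : ∀ e, n e + k e = m e + 2 * c e) :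
    sources G m = symmDiff (sources G n) (sources G k) := by
  ext x
  have key : (∑ e : ↥G.edgeFinset, if x ∈ (e : Sym2 V) then n e else 0) +
      (∑ e : ↥G.edgeFinset, if x ∈ (e : Sym2 V) then k e else 0) =
      (∑ e : ↥G.edgeFinset, if x ∈ (e : Sym2 V) then m e else 0) +
      2 * (∑ e : ↥G.edgeFinset, if x ∈ (e : Sym2 V) then c e else 0) := by
    rw [Finset.mul_sum, ← Finset.sum_add_distrib, ← Finset.sum_add_distrib]
    refine Finset.sum_congr rfl fun e _ => ?_
    split_ifs
    · exact h e
    · rfl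
  simp only [sources, Finset.mem_symmDiff, Finset.mem_filter, Finset.mem_univ, true_and,
    Nat.even_iff]
  omega

lemma summable_currentWeight {V : Type*} [Fintype V] [DecidableEq V]
    (G : SimpleGraph V) [DecidableRel G.Adj] (β : ℝ) (hβ : 0 < β) :
    Summable (currentWeight G β) := by
  refine summable_of_sum_le (c := ∏ _e : ↥G.edgeFinset, Real.exp β) ?_ ?_
  · intro n
    exact Finset.prod_nonneg fun e _ => by positivity
  · intro u
    let N : ℕ := u.sup (fun n => ∑ e, n e) + 1
    have hsub : u ⊆ Fintype.piFinset (fun _ : ↥G.edgeFinset => Finset.range N) := by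
      intro n hn
      rw [Fintype.mem_piFinset]
      intro e
      have h1 : n e ≤ ∑ e, n e :=
        Finset.single_le_sum (f := n) (fun _ _ => Nat.zero_le _) (Finset.mem_univ e)
      have h2 : ∑ e, n e ≤ u.sup (fun n => ∑ e, n e) :=
        Finset.le_sup (f := fun n : ↥G.edgeFinset → ℕ => ∑ e, n e) hn
      simp only [Finset.mem_range, N]
      omega
    calc ∑ n ∈ u, currentWeight G β n
        ≤ ∑ n ∈ Fintype.piFinset (fun _ : ↥G.edgeFinset => Finset.range N),
            currentWeight G β n := by
          refine Finset.sum_le_sum_of_subset_of_nonneg hsub fun n _ _ => ?_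
          exact Finset.prod_nonneg fun e _ => by positivity
      _ = ∏ _e : ↥G.edgeFinset, ∑ j ∈ Finset.range N, β ^ j / (Nat.factorial j : ℝ) := by
          rw [Finset.prod_univ_sum]
          rfl
      _ ≤ _ := by
          refine Finset.prod_le_prod (fun e _ => Finset.sum_nonneg fun j _ => by positivity) ?_
          intro e _
          exact Real.sum_le_exp_of_nonneg hβ.le N

/-- Sum over the pairs with a given sum, as a sum over subsets of the multigraph. -/
lemma tsum_fiber_eq {V : Type*} [Fintype V] [DecidableEq V]
    (G : SimpleGraph V) [DecidableRel G.Adj] (β : ℝ) (m : ↥G.edgeFinset → ℕ)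
    (g : (↥G.edgeFinset → ℕ) × (↥G.edgeFinset → ℕ) → ℝ) :
    (∑' p : {p : (↥G.edgeFinset → ℕ) × (↥G.edgeFinset → ℕ) // p.1 + p.2 = m},
      currentWeight G β p.1.1 * currentWeight G β p.1.2 * g p.1) =
    currentWeight G β m * ∑ S : (∀ e : ↥G.edgeFinset, Finset (Fin (m e))),
      g (fun e => (S e).card, fun e => m e - (S e).card) := by
  classical
  have hcard : ∀ S : (∀ e : ↥G.edgeFinset, Finset (Fin (m e))), ∀ e, (S e).card ≤ m e := by
    intro S e
    simpa using Finset.card_le_univ (S e)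
  let φ : (∀ e : ↥G.edgeFinset, Finset (Fin (m e))) →
      {p : (↥G.edgeFinset → ℕ) × (↥G.edgeFinset → ℕ) // p.1 + p.2 = m} :=
    fun S => ⟨(fun e => (S e).card, fun e => m e - (S e).card), by
      funext e
      have := hcard S e
      simp only [Pi.add_apply]
      omega⟩
  have hφ : ∀ p : {p : (↥G.edgeFinset → ℕ) × (↥G.edgeFinset → ℕ) // p.1 + p.2 = m},
      ∀ S, φ S = p ↔ S ∈ Fintype.piFinset (fun e => Finset.powersetCard (p.1.1 e) Finset.univ) := by
    rintro ⟨⟨a, b⟩, hp⟩ S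
    simp only [φ, Subtype.mk.injEq, Prod.mk.injEq, Fintype.mem_piFinset, Finset.mem_powersetCard,
      Finset.subset_univ, true_and]
    constructor
    · rintro ⟨h, -⟩ e
      exact congrFun h e
    · intro h
      refine ⟨funext h, funext fun e => ?_⟩
      have := congrFun hp e
      simp only [Pi.add_apply] at this
      rw [h e]
      omega
  have hfib : ∀ p : {p : (↥G.edgeFinset → ℕ) × (↥G.edgeFinset → ℕ) // p.1 + p.2 = m},
      Finset.univ.filter (fun S => φ S = p) =
        Fintype.piFinset (fun e => Finset.powersetCard (p.1.1 e) Finset.univ) := by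
    intro p
    ext S
    simp only [Finset.mem_filter, Finset.mem_univ, true_and]
    exact hφ p S
  have hw : ∀ p : {p : (↥G.edgeFinset → ℕ) × (↥G.edgeFinset → ℕ) // p.1 + p.2 = m},
      currentWeight G β p.1.1 * currentWeight G β p.1.2 =
        currentWeight G β m * ((Finset.univ.filter (fun S => φ S = p)).card : ℝ) := by
    intro p
    rw [hfib p, Fintype.card_piFinset]
    simp only [Finset.card_powersetCard, Finset.card_univ, Fintype.card_fin, Nat.cast_prod,
      currentWeight]
    rw [← Finset.prod_mul_distrib, ← Finset.prod_mul_distrib]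
    refine Finset.prod_congr rfl fun e _ => ?_
    have he : p.1.1 e + p.1.2 e = m e := congrFun p.2 e
    rw [← he, Nat.cast_add_choose ℝ, pow_add]
    have := Nat.factorial_ne_zero (p.1.1 e)
    have := Nat.factorial_ne_zero (p.1.2 e)
    have := Nat.factorial_ne_zero (p.1.1 e + p.1.2 e)
    field_simp
  have hsurj : Function.Surjective φ := by
    intro p
    have hne : (Fintype.piFinset (fun e =>
        Finset.powersetCard (p.1.1 e) (Finset.univ : Finset (Fin (m e))))).Nonempty := by
      rw [Fintype.piFinset_nonempty]
      intro e
      rw [Finset.powersetCard_nonempty]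
      have he : p.1.1 e + p.1.2 e = m e := congrFun p.2 e
      simp only [Finset.card_univ, Fintype.card_fin]
      omega
    obtain ⟨S, hS⟩ := hne
    exact ⟨S, (hφ p S).2 hS⟩
  have : Fintype {p : (↥G.edgeFinset → ℕ) × (↥G.edgeFinset → ℕ) // p.1 + p.2 = m} :=
    Fintype.ofSurjective φ hsurj
  rw [tsum_fintype]
  have : ∑ S : (∀ e : ↥G.edgeFinset, Finset (Fin (m e))),
      g (fun e => (S e).card, fun e => m e - (S e).card) = ∑ S, g (φ S).1 := rfl
  rw [this, ← Finset.sum_fiberwise Finset.univ φ, Finset.mul_sum]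
  refine Finset.sum_congr rfl fun p _ => ?_
  rw [hw p, mul_assoc]
  congr 1
  rw [Finset.sum_congr rfl (g := fun _ => g p.1)]
  · simp
  · intro S hS
    rw [(Finset.mem_filter.1 hS).2]

lemma fiber_switch {V : Type*} [Fintype V] [DecidableEq V]
    (G : SimpleGraph V) [DecidableRel G.Adj] (A : Finset V) (m : ↥G.edgeFinset → ℕ)
    [Decidable (∃ k : ↥G.edgeFinset → ℕ, k ≤ m ∧ sources G k = A)] :
    (∑ S : (∀ e : ↥G.edgeFinset, Finset (Fin (m e))),
      (if sources G (fun e => (S e).card) = A ∧ sources G (fun e => m e - (S e).card) = A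
        then (1 : ℝ) else 0)) =
    ∑ S : (∀ e : ↥G.edgeFinset, Finset (Fin (m e))),
      (if sources G (fun e => (S e).card) = ∅ ∧ sources G (fun e => m e - (S e).card) = ∅ ∧
        (∃ k : ↥G.edgeFinset → ℕ, k ≤ m ∧ sources G k = A)
        then (1 : ℝ) else 0) := by
  classical
  have hcard : ∀ S : (∀ e : ↥G.edgeFinset, Finset (Fin (m e))), ∀ e, (S e).card ≤ m e := by
    intro S e
    simpa using Finset.card_le_univ (S e)
  by_cases hk : ∃ k : ↥G.edgeFinset → ℕ, k ≤ m ∧ sources G k = A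
  · simp only [hk, and_true]
    obtain ⟨k, hkm, hkA⟩ := hk
    have : ∀ e, ∃ K : Finset (Fin (m e)), K.card = k e := by
      intro e
      obtain ⟨K, -, hK⟩ := Finset.exists_subset_card_eq
        (s := (Finset.univ : Finset (Fin (m e)))) (n := k e) (by simpa using hkm e)
      exact ⟨K, hK⟩
    choose K hK using this
    have hinv : Function.Involutive
        (fun S : (∀ e : ↥G.edgeFinset, Finset (Fin (m e))) => fun e => symmDiff (S e) (K e)) := by
      intro S
      funext e
      simp
    refine Fintype.sum_equiv hinv.toPerm _ _ fun S => ?_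
    have hsd : ∀ e, (symmDiff (S e) (K e)).card + 2 * (S e ∩ K e).card =
        (S e).card + k e := by
      intro e
      rw [← hK e]
      have h1 : (symmDiff (S e) (K e)).card = (S e \ K e).card + (K e \ S e).card := by
        rw [symmDiff_def]
        exact Finset.card_union_of_disjoint disjoint_sdiff_sdiff
      have h2 := Finset.card_sdiff_add_card_inter (S e) (K e)
      have h3 := Finset.card_sdiff_add_card_inter (K e) (S e)
      rw [Finset.inter_comm] at h3
      omega
    have e1 : sources G (fun e => (symmDiff (S e) (K e)).card) =
        symmDiff (sources G (fun e => (S e).card)) A := by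
      rw [← hkA]
      exact sources_parity G _ _ _ (fun e => (S e ∩ K e).card) fun e => (hsd e).symm
    have e2 : ∀ T : (∀ e : ↥G.edgeFinset, Finset (Fin (m e))),
        sources G (fun e => m e - (T e).card) =
          symmDiff (sources G m) (sources G (fun e => (T e).card)) := by
      intro T
      refine sources_parity G _ _ _ (fun e => (T e).card) fun e => ?_
      have := hcard T e
      omega
    have e3 := e2 (fun e => symmDiff (S e) (K e))
    refine if_congr ?_ rfl rfl
    simp only [Function.Involutive.coe_toPerm]
    rw [e3, e1, e2 S]
    rw [← symmDiff_assoc]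
    simp only [← Finset.bot_eq_empty, symmDiff_eq_bot]
  · simp only [hk, and_false, if_false]
    refine Finset.sum_congr rfl fun S _ => ?_
    rw [if_neg]
    rintro ⟨h, -⟩
    exact hk ⟨_, fun e => hcard S e, h⟩

open scoped Classical in
/-- **Squared correlations via two independent sourceless currents**: for the Ising
model at zero field on a finite graph `G` and `A ⊆ V`,
`⟨σ_A⟩² = P^∅⊗P^∅[n₁ + n₂ ∈ F_A]`, where `P^∅` is the probability measure on
currents with empty source set proportional to `w`, and `F_A` is the event that some
`k ≤ n₁ + n₂` has `∂k = A`. -/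
theorem squared_correlation_two_currents {V : Type*} [Fintype V] [DecidableEq V]
    (G : SimpleGraph V) [DecidableRel G.Adj] (β : ℝ) (hβ : 0 < β) (A : Finset V) :
    ((∑' n : ↥G.edgeFinset → ℕ, if sources G n = A then currentWeight G β n else 0) /
        (∑' n : ↥G.edgeFinset → ℕ, if sources G n = ∅ then currentWeight G β n else 0)) ^ 2 =
      (∑' p : (↥G.edgeFinset → ℕ) × (↥G.edgeFinset → ℕ),
          if sources G p.1 = ∅ ∧ sources G p.2 = ∅ ∧
              (∃ k : ↥G.edgeFinset → ℕ, k ≤ p.1 + p.2 ∧ sources G k = A) then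
            currentWeight G β p.1 * currentWeight G β p.2 else 0) /
        (∑' n : ↥G.edgeFinset → ℕ, if sources G n = ∅ then currentWeight G β n else 0) ^ 2 := by
  rw [div_pow]
  congr 1
  have hs := summable_currentWeight G β hβ
  have hnn : ∀ n, 0 ≤ currentWeight G β n := fun n =>
    Finset.prod_nonneg fun e _ => by positivity
  have hsA : Summable fun n : ↥G.edgeFinset → ℕ =>
      if sources G n = A then currentWeight G β n else 0 := by
    refine Summable.of_nonneg_of_le (fun n => ?_) (fun n => ?_) hs
    · split_ifs <;> simp [hnn]
    · split_ifs <;> simp [hnn]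
  have hs2 : Summable fun p : (↥G.edgeFinset → ℕ) × (↥G.edgeFinset → ℕ) =>
      currentWeight G β p.1 * currentWeight G β p.2 :=
    hs.mul_of_nonneg hs hnn hnn
  have hsg : ∀ P : (↥G.edgeFinset → ℕ) × (↥G.edgeFinset → ℕ) → Prop,
      (∑' p, currentWeight G β p.1 * currentWeight G β p.2 * (if P p then (1 : ℝ) else 0)) =
      ∑' m : ↥G.edgeFinset → ℕ, currentWeight G β m *
        ∑ S : (∀ e : ↥G.edgeFinset, Finset (Fin (m e))),
          (if P (fun e => (S e).card, fun e => m e - (S e).card) then (1 : ℝ) else 0) := by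
    intro P
    have hsP : Summable fun p : (↥G.edgeFinset → ℕ) × (↥G.edgeFinset → ℕ) =>
        currentWeight G β p.1 * currentWeight G β p.2 * (if P p then (1 : ℝ) else 0) := by
      refine Summable.of_nonneg_of_le (fun p => ?_) (fun p => ?_) hs2
      · exact mul_nonneg (mul_nonneg (hnn _) (hnn _)) (by split_ifs <;> norm_num)
      · exact mul_le_of_le_one_right (mul_nonneg (hnn _) (hnn _)) (by split_ifs <;> norm_num)
    let E := Equiv.sigmaFiberEquiv
      (fun p : (↥G.edgeFinset → ℕ) × (↥G.edgeFinset → ℕ) => p.1 + p.2)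
    rw [← E.tsum_eq]
    have h := (E.summable_iff.2 hsP).tsum_sigma
    refine h.trans (tsum_congr fun m => ?_)
    exact tsum_fiber_eq G β m (fun p => if P p then (1 : ℝ) else 0)
  have hnA : ∀ n : ↥G.edgeFinset → ℕ,
      0 ≤ if sources G n = A then currentWeight G β n else 0 := by
    intro n
    split_ifs
    · exact hnn n
    · exact le_rfl
  have hmul : ∀ f : (↥G.edgeFinset → ℕ) → ℝ, Summable f → (∀ n, 0 ≤ f n) →
      (∑' n, f n) ^ 2 = ∑' p : (↥G.edgeFinset → ℕ) × (↥G.edgeFinset → ℕ), f p.1 * f p.2 := by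
    intro f hf h0
    rw [pow_two]
    exact hf.tsum_mul_tsum hf (hf.mul_of_nonneg hf h0 h0)
  rw [hmul _ hsA hnA]
  have hL := hsg (fun p => sources G p.1 = A ∧ sources G p.2 = A)
  have hR := hsg (fun p => sources G p.1 = ∅ ∧ sources G p.2 = ∅ ∧
              (∃ k : ↥G.edgeFinset → ℕ, k ≤ p.1 + p.2 ∧ sources G k = A))
  refine Eq.trans (Eq.trans (tsum_congr fun p => ?_) hL)
    (Eq.trans ?_ (Eq.trans hR.symm (tsum_congr fun p => ?_)))
  · by_cases h1 : sources G p.1 = A <;> by_cases h2 : sources G p.2 = A <;> simp [h1, h2]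
  · refine tsum_congr fun m => ?_
    congr 1
    refine Eq.trans (Eq.trans ?_ (fiber_switch G A m)) ?_
    · exact Finset.sum_congr rfl fun S _ => ite_any_inst Iff.rfl _ _
    · refine Finset.sum_congr rfl fun S _ => ite_any_inst ?_ _ _
      have : ((fun e => (S e).card) + fun e => m e - (S e).card) = m := by
        funext e
        have : (S e).card ≤ m e := by simpa using Finset.card_le_univ (S e)
        simp only [Pi.add_apply]
        omega
      simp only [this]
  · exact mul_ite_any_inst _
end
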